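/- Let Λ be a symmetric positive definite N×N matrix, let x_1, …, x_T ∈ ℝ^N with ‖x_t‖_2 ≤ 1 for all t, define V_0 = Λ and V_t = V_{t−1} + x_t x_t^T, let λ > 0 be the smallest eigenvalue of Λ, and let c > 0. If real numbers ρ_1, …, ρ_T satisfy 0 ≤ ρ_t ≤ min(2, 2c ‖x_t‖_{V_{t−1}^{−1}}) for all t, then Σ_{t=1}^T ρ_t ≤ (2c + 2) √(2 T log(det(V_T)/det(Λ))). In particular, if d is the effective dimension of Λ with horizon T, then Σ_{t=1}^T ρ_t ≤ (2c + 2) · 2 √(d T log(1 + T/λ)). -/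

import Mathlib

open Matrix Finset

/-- The regularized design matrix after `t` rounds:
`V_t = Λ + ∑_{τ < t} x_τ x_τᵀ` (so `V_0 = Λ` and `V_t = V_{t-1} + x_t x_tᵀ`,
with the rounds `0`-indexed by `Fin T`). -/
def designMatrix (N T : ℕ) (Λ : Matrix (Fin N) (Fin N) ℝ)
    (x : Fin T → Fin N → ℝ) (t : ℕ) : Matrix (Fin N) (Fin N) ℝ :=
  Λ + ∑ τ ∈ Finset.univ.filter (fun τ : Fin T => (τ : ℕ) < t),
        Matrix.vecMulVec (x τ) (x τ)

/-- The defining set of the effective dimension: the set of `d ∈ {1, …, N}`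
with `(d - 1) λ_d ≤ T / log (1 + T / λ)`, where `ev d` is the `d`-th
(1-indexed) eigenvalue of `Λ` and `λ = λ₁ = ev 1` the smallest one. -/
def effDimSet (N : ℕ) (ev : ℕ → ℝ) (T : ℝ) : Set ℕ :=
  {d : ℕ | 1 ≤ d ∧ d ≤ N ∧ ((d : ℝ) - 1) * ev d ≤ T / Real.log (1 + T / ev 1)}

/-!
The matrix determinant lemma turns `log (1 + ‖x_t‖²)`, with the norm weighted by `V_{t-1}⁻¹`, into
the increment of `log det V_t`, so these terms telescope; together with `min 1 u ≤ 2 log (1 + u)`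
and the Cauchy–Schwarz inequality this gives the first bound.

For the second, write `V_T = Λ + S` in an eigenbasis of `Λ`. Hadamard's inequality gives
`log (det V_T / det Λ) ≤ ∑ log (1 + S_ii / λ_i)`, where `∑ S_ii ≤ T`. Each of the first `d` terms is
at most `log (1 + T / λ)`. The remaining ones sum to at most `T / λ_{d+1}`, which is below
`d log (1 + T / λ)` because `d + 1` violates the condition defining the effective dimension.
-/

section ScalarInequalities

theorem min_one_le_two_mul_log_one_add {u : ℝ} (hu : 0 ≤ u) : min 1 u ≤ 2 * Real.log (1 + u) := by
  have hlog : 2 * u / (u + 2) ≤ Real.log (1 + u) := Real.le_log_one_add_of_nonneg hu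
  suffices min 1 u / 2 ≤ 2 * u / (u + 2) by linarith
  rw [div_le_div_iff₀ two_pos (by positivity)]
  rcases le_total 1 u with h | h
  · rw [min_eq_left h]; linarith
  · rw [min_eq_right h]; nlinarith

theorem min_one_sqrt_sq {u : ℝ} (hu : 0 ≤ u) : min 1 √u ^ 2 = min 1 u := by
  rcases le_total 1 u with h | h
  · rw [min_eq_left h, min_eq_left (Real.one_le_sqrt.mpr h), one_pow]
  · rw [min_eq_right h, min_eq_right (Real.sqrt_le_one.mpr h), Real.sq_sqrt hu]

theorem min_two_le_mul_min_one {c r : ℝ} (hc : 0 ≤ c) (hr : 0 ≤ r) :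
    min 2 (2 * c * r) ≤ (2 * c + 2) * min 1 r := by
  rcases le_total 1 r with h | h
  · rw [min_eq_left h]; linarith [min_le_left 2 (2 * c * r)]
  · rw [min_eq_right h]; linarith [min_le_right 2 (2 * c * r)]

theorem sum_min_one_sqrt_le {ι : Type*} [Fintype ι] {q : ι → ℝ} (hq : ∀ i, 0 ≤ q i) :
    ∑ i, min 1 √(q i) ≤ √(Fintype.card ι * ∑ i, min 1 (q i)) := by
  refine Real.le_sqrt_of_sq_le ?_
  simpa only [min_one_sqrt_sq (hq _), card_univ] using
    sq_sum_le_card_mul_sum_sq (s := univ) (f := fun i => min 1 √(q i))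

end ScalarInequalities

section Matrices

variable {n : Type*} [Fintype n] [DecidableEq n]

theorem det_add_vecMulVec {R : Type*} [CommRing R] {A : Matrix n n R} (hA : IsUnit A.det)
    (u v : n → R) : (A + vecMulVec u v).det = A.det * (1 + v ⬝ᵥ A⁻¹ *ᵥ u) := by
  rw [vecMulVec_eq Unit, det_add_replicateCol_mul_replicateRow hA, det_unique (n := Unit),
    Matrix.mul_assoc, ← replicateCol_mulVec, replicateRow_mul_replicateCol]
  simp

theorem log_one_add_dotProduct_inv_mulVec {A : Matrix n n ℝ} (hA : A.PosDef) (u : n → ℝ) :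
    Real.log (1 + u ⬝ᵥ A⁻¹ *ᵥ u) = Real.log (A + vecMulVec u u).det - Real.log A.det := by
  have hu : 0 ≤ u ⬝ᵥ A⁻¹ *ᵥ u := hA.inv.posSemidef.dotProduct_mulVec_nonneg u
  rw [det_add_vecMulVec hA.det_pos.ne'.isUnit, Real.log_mul hA.det_pos.ne' (by positivity),
    add_sub_cancel_left]

theorem det_le_exp_trace_sub_card_of_posDef {A : Matrix n n ℝ} (hA : A.PosDef) :
    A.det ≤ Real.exp (A.trace - Fintype.card n) := by
  have hdet : A.det = ∏ i, hA.isHermitian.eigenvalues i :=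
    hA.isHermitian.det_eq_prod_eigenvalues
  have htrace : A.trace = ∑ i, hA.isHermitian.eigenvalues i :=
    hA.isHermitian.trace_eq_sum_eigenvalues
  calc A.det = ∏ i, hA.isHermitian.eigenvalues i := hdet
    _ ≤ ∏ i, Real.exp (hA.isHermitian.eigenvalues i - 1) :=
      prod_le_prod (fun i _ => (hA.eigenvalues_pos i).le) fun i _ => by
        linarith [Real.add_one_le_exp (hA.isHermitian.eigenvalues i - 1)]
    _ = Real.exp (A.trace - Fintype.card n) := by
      rw [← Real.exp_sum, sum_sub_distrib, htrace, sum_const, card_univ, nsmul_one]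

theorem det_le_one_of_posDef_of_diag_eq_one {A : Matrix n n ℝ} (hA : A.PosDef)
    (hdiag : ∀ i, A i i = 1) : A.det ≤ 1 := by
  have htrace : A.trace = Fintype.card n := by simp [trace, hdiag]
  simpa [htrace] using det_le_exp_trace_sub_card_of_posDef hA

/-- **Hadamard's inequality**, by rescaling `A` to unit diagonal. -/
theorem det_le_prod_diag_of_posDef {A : Matrix n n ℝ} (hA : A.PosDef) : A.det ≤ ∏ i, A i i := by
  set s : n → ℝ := fun i => (√(A i i))⁻¹
  have hs_pos (i : n) : 0 < s i := inv_pos.mpr (Real.sqrt_pos.mpr hA.diag_pos)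
  have hs_sq (i : n) : s i * s i = (A i i)⁻¹ := by
    rw [← mul_inv, Real.mul_self_sqrt hA.diag_pos.le]
  have hs : (diagonal s).PosDef := posDef_diagonal_iff.mpr hs_pos
  have hscaled : (diagonal s * A * diagonal s).PosDef := by
    simpa only [hs.isHermitian.eq] using
      hA.conjTranspose_mul_mul_same (mulVec_injective_of_isUnit hs.isUnit)
  have hdiag (i : n) : (diagonal s * A * diagonal s) i i = 1 := by
    rw [mul_diagonal, diagonal_mul, mul_right_comm, hs_sq, inv_mul_cancel₀ hA.diag_pos.ne']
  have hdet : (diagonal s * A * diagonal s).det = A.det / ∏ i, A i i := by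
    rw [det_mul, det_mul, det_diagonal, mul_right_comm, ← prod_mul_distrib,
      prod_congr rfl fun i _ => hs_sq i, prod_inv_distrib, inv_mul_eq_div]
  have hle := det_le_one_of_posDef_of_diag_eq_one hscaled hdiag
  rwa [hdet, div_le_one (prod_pos fun i _ => hA.diag_pos)] at hle

theorem log_det_diagonal_add_div_det_le {w : n → ℝ} (hw : ∀ i, 0 < w i) {S : Matrix n n ℝ}
    (hS : S.PosSemidef) :
    Real.log ((diagonal w + S).det / (diagonal w).det) ≤ ∑ i, Real.log (1 + S i i / w i) := by
  have hdiag : (diagonal w).PosDef := posDef_diagonal_iff.mpr hw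
  have hsum : (diagonal w + S).PosDef := hdiag.add_posSemidef hS
  have hfactor (i : n) : (diagonal w + S) i i / w i = 1 + S i i / w i := by
    rw [Matrix.add_apply, diagonal_apply_eq, add_div, div_self (hw i).ne']
  have hfactor_pos (i : n) : 0 < 1 + S i i / w i := hfactor i ▸ div_pos hsum.diag_pos (hw i)
  rw [← Real.log_prod fun i _ => (hfactor_pos i).ne']
  refine Real.log_le_log (div_pos hsum.det_pos hdiag.det_pos) ?_
  calc (diagonal w + S).det / (diagonal w).det
      ≤ (∏ i, (diagonal w + S) i i) / ∏ i, w i := by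
        rw [det_diagonal]
        exact div_le_div_of_nonneg_right (det_le_prod_diag_of_posDef hsum)
          (prod_nonneg fun i _ => (hw i).le)
    _ = ∏ i, (1 + S i i / w i) := by
        rw [← prod_div_distrib, prod_congr rfl fun i _ => hfactor i]

theorem det_mul_mul_star_of_mem_unitaryGroup {R : Type*} [CommRing R] [StarRing R]
    {U : Matrix n n R} (hU : U ∈ unitaryGroup n R) (A : Matrix n n R) :
    (U * A * star U).det = A.det := by
  rw [det_mul_right_comm, mem_unitaryGroup_iff.mp hU, Matrix.one_mul]

theorem posSemidef_sum_vecMulVec_self {ι n : Type*} [Finite n] (s : Finset ι) (x : ι → n → ℝ) :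
    (∑ i ∈ s, vecMulVec (x i) (x i)).PosSemidef :=
  posSemidef_sum s fun i _ => posSemidef_vecMulVec_self_star (x i)

theorem trace_sum_vecMulVec_self_le_card {ι n : Type*} [Fintype ι] [Fintype n] {x : ι → n → ℝ}
    (hx : ∀ t, ∑ i, x t i ^ 2 ≤ 1) :
    (∑ t, vecMulVec (x t) (x t)).trace ≤ Fintype.card ι := by
  calc (∑ t, vecMulVec (x t) (x t)).trace = ∑ t, ∑ i, x t i ^ 2 := by
        simp [trace_sum, trace_vecMulVec, dotProduct, sq]
    _ ≤ ∑ _t : ι, 1 := sum_le_sum fun t _ => hx t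
    _ = Fintype.card ι := by simp

end Matrices

section EffectiveDimension

variable {N d : ℕ} {ev : ℕ → ℝ}

theorem apply_one_le_apply_val_add_one (hmono : MonotoneOn ev (Set.Icc 1 N)) (i : Fin N) :
    ev 1 ≤ ev (i + 1) :=
  hmono ⟨le_rfl, i.pos⟩ ⟨by lia, i.isLt⟩ (by lia)

theorem apply_val_add_one_pos (hpos : 0 < ev 1) (hmono : MonotoneOn ev (Set.Icc 1 N))
    (i : Fin N) : 0 < ev (i + 1) :=
  hpos.trans_le (apply_one_le_apply_val_add_one hmono i)

theorem le_mul_log_of_isGreatest_effDimSet {T : ℝ} (hT : 0 ≤ T) (hpos : 0 < ev 1)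
    (hd : IsGreatest (effDimSet N ev T) d) (hdN : d < N) :
    T ≤ d * ev (d + 1) * Real.log (1 + T / ev 1) := by
  rcases hT.eq_or_lt with rfl | hT
  · simp
  have hlog : 0 < Real.log (1 + T / ev 1) :=
    Real.log_pos (lt_add_of_pos_right 1 (div_pos hT hpos))
  have hnot_mem : d + 1 ∉ effDimSet N ev T := fun hmem => by simpa using hd.2 hmem
  have hlt : T / Real.log (1 + T / ev 1) < d * ev (d + 1) := by
    by_contra! hle
    exact hnot_mem ⟨by lia, hdN, by simpa using hle⟩
  exact ((div_lt_iff₀ hlog).mp hlt).le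

variable {T : ℝ} {a : Fin N → ℝ}

theorem sum_log_one_add_div_head_le (hpos : 0 < ev 1) (hmono : MonotoneOn ev (Set.Icc 1 N))
    (ha : ∀ i, 0 ≤ a i) (hsum : ∑ i, a i ≤ T) :
    ∑ i with i.val < d, Real.log (1 + a i / ev (i + 1)) ≤ d * Real.log (1 + T / ev 1) := by
  have hT : 0 ≤ T := (sum_nonneg fun i _ => ha i).trans hsum
  have hterm (i : Fin N) : Real.log (1 + a i / ev (i + 1)) ≤ Real.log (1 + T / ev 1) := by
    have hev := apply_val_add_one_pos hpos hmono i
    have hai : a i ≤ T := (single_le_sum (fun j _ => ha j) (mem_univ i)).trans hsum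
    have := ha i
    gcongr
    exact apply_one_le_apply_val_add_one hmono i
  calc ∑ i with i.val < d, Real.log (1 + a i / ev (i + 1))
      ≤ #{i : Fin N | i.val < d} • Real.log (1 + T / ev 1) :=
        sum_le_card_nsmul _ _ _ fun i _ => hterm i
    _ ≤ d * Real.log (1 + T / ev 1) := by
        rw [nsmul_eq_mul, Fin.card_filter_val_lt]
        have hlog : 0 ≤ Real.log (1 + T / ev 1) :=
          Real.log_nonneg (le_add_of_nonneg_right (div_nonneg hT hpos.le))
        gcongr
        exact min_le_right N d

theorem sum_log_one_add_div_tail_le (hpos : 0 < ev 1) (hmono : MonotoneOn ev (Set.Icc 1 N))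
    (ha : ∀ i, 0 ≤ a i) (hsum : ∑ i, a i ≤ T) (hdN : d < N) :
    ∑ i with ¬ i.val < d, Real.log (1 + a i / ev (i + 1)) ≤ T / ev (d + 1) := by
  have hev : 0 < ev (d + 1) := apply_val_add_one_pos hpos hmono ⟨d, hdN⟩
  have hterm (i : Fin N) (hi : ¬ i.val < d) :
      Real.log (1 + a i / ev (i + 1)) ≤ a i / ev (d + 1) := by
    have hevi := apply_val_add_one_pos hpos hmono i
    have hev_le : ev (d + 1) ≤ ev (i + 1) :=
      hmono ⟨by lia, by lia⟩ ⟨by lia, by lia⟩ (by lia)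
    have hdiv : 0 ≤ a i / ev (i + 1) := div_nonneg (ha i) hevi.le
    calc Real.log (1 + a i / ev (i + 1)) ≤ a i / ev (i + 1) := by
          linarith [Real.log_le_sub_one_of_pos (show 0 < 1 + a i / ev (i + 1) by positivity)]
      _ ≤ a i / ev (d + 1) := div_le_div_of_nonneg_left (ha i) hev hev_le
  calc ∑ i with ¬ i.val < d, Real.log (1 + a i / ev (i + 1))
      ≤ ∑ i : Fin N with ¬ i.val < d, a i / ev (d + 1) :=
        sum_le_sum fun i hi => hterm i (mem_filter.mp hi).2
    _ ≤ ∑ i, a i / ev (d + 1) :=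
        sum_le_sum_of_subset_of_nonneg (filter_subset _ _) fun i _ _ => div_nonneg (ha i) hev.le
    _ ≤ T / ev (d + 1) := by
        rw [← sum_div]
        gcongr

theorem sum_log_one_add_div_le (hpos : 0 < ev 1) (hmono : MonotoneOn ev (Set.Icc 1 N))
    (hd : IsGreatest (effDimSet N ev T) d) (ha : ∀ i, 0 ≤ a i) (hsum : ∑ i, a i ≤ T) :
    ∑ i, Real.log (1 + a i / ev (i + 1)) ≤ 2 * d * Real.log (1 + T / ev 1) := by
  have hT : 0 ≤ T := (sum_nonneg fun i _ => ha i).trans hsum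
  have hhead := sum_log_one_add_div_head_le (d := d) hpos hmono ha hsum
  have htail : ∑ i with ¬ i.val < d, Real.log (1 + a i / ev (i + 1)) ≤
      d * Real.log (1 + T / ev 1) := by
    rcases hd.1.2.1.eq_or_lt with rfl | hdN
    · have hlog : 0 ≤ Real.log (1 + T / ev 1) :=
        Real.log_nonneg (le_add_of_nonneg_right (div_nonneg hT hpos.le))
      simpa using mul_nonneg (Nat.cast_nonneg d) hlog
    · refine (sum_log_one_add_div_tail_le hpos hmono ha hsum hdN).trans ?_
      rw [div_le_iff₀ (apply_val_add_one_pos hpos hmono ⟨d, hdN⟩), mul_right_comm]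
      exact le_mul_log_of_isGreatest_effDimSet hT hpos hd hdN
  rw [← sum_filter_add_sum_filter_not univ (fun i : Fin N => i.val < d)]
  linarith

theorem log_det_add_div_det_le (hpos : 0 < ev 1) (hmono : MonotoneOn ev (Set.Icc 1 N))
    (hd : IsGreatest (effDimSet N ev T) d) {U Λ S : Matrix (Fin N) (Fin N) ℝ}
    (hU : U ∈ unitaryGroup (Fin N) ℝ)
    (hΛ : Λ = U * diagonal (fun i : Fin N => ev (i + 1)) * star U)
    (hS : S.PosSemidef) (htrace : S.trace ≤ T) :
    Real.log ((Λ + S).det / Λ.det) ≤ 2 * d * Real.log (1 + T / ev 1) := by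
  set D : Matrix (Fin N) (Fin N) ℝ := diagonal fun i => ev (i + 1)
  set S' : Matrix (Fin N) (Fin N) ℝ := star U * S * U
  have hS' : S'.PosSemidef := hS.conjTranspose_mul_mul_same _
  have htrace' : S'.trace = S.trace := by
    rw [trace_mul_cycle, mem_unitaryGroup_iff.mp hU, Matrix.one_mul]
  have hsum : Λ + S = U * (D + S') * star U := by
    have hS_eq : S = U * S' * star U := by
      simp only [S', Matrix.mul_assoc, mem_unitaryGroup_iff.mp hU, Matrix.mul_one]
      rw [← Matrix.mul_assoc, mem_unitaryGroup_iff.mp hU, Matrix.one_mul]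
    rw [Matrix.mul_add, Matrix.add_mul, ← hΛ, ← hS_eq]
  rw [hsum, hΛ, det_mul_mul_star_of_mem_unitaryGroup hU, det_mul_mul_star_of_mem_unitaryGroup hU]
  exact (log_det_diagonal_add_div_det_le (apply_val_add_one_pos hpos hmono) hS').trans
    (sum_log_one_add_div_le hpos hmono hd (fun i => hS'.diag_nonneg) (htrace'.trans_le htrace))

end EffectiveDimension

section DesignMatrix

variable {N T : ℕ} {Λ : Matrix (Fin N) (Fin N) ℝ}

theorem designMatrix_posDef (hΛ : Λ.PosDef) (x : Fin T → Fin N → ℝ) (t : ℕ) :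
    (designMatrix N T Λ x t).PosDef :=
  hΛ.add_posSemidef (posSemidef_sum_vecMulVec_self _ x)

theorem designMatrix_zero (x : Fin T → Fin N → ℝ) : designMatrix N T Λ x 0 = Λ := by
  simp [designMatrix]

theorem designMatrix_last (x : Fin T → Fin N → ℝ) :
    designMatrix N T Λ x T = Λ + ∑ t, vecMulVec (x t) (x t) := by
  simp [designMatrix]

theorem designMatrix_add_one (x : Fin T → Fin N → ℝ) (t : Fin T) :
    designMatrix N T Λ x (t + 1) = designMatrix N T Λ x t + vecMulVec (x t) (x t) := by
  have hinsert : univ.filter (fun τ : Fin T => τ.val < t + 1) =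
      insert t (univ.filter fun τ : Fin T => τ.val < t) := by
    ext τ
    simp only [mem_filter_univ, mem_insert, Fin.ext_iff]
    lia
  rw [designMatrix, hinsert, sum_insert (by simp), designMatrix, add_assoc,
    add_comm (vecMulVec (x t) (x t))]

theorem dotProduct_inv_designMatrix_mulVec_nonneg (hΛ : Λ.PosDef) (x : Fin T → Fin N → ℝ)
    (t : Fin T) : 0 ≤ x t ⬝ᵥ (designMatrix N T Λ x t)⁻¹ *ᵥ x t :=
  (designMatrix_posDef hΛ x t).inv.posSemidef.dotProduct_mulVec_nonneg (x t)

theorem sum_log_one_add_eq_log_det_div_det (hΛ : Λ.PosDef) (x : Fin T → Fin N → ℝ) :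
    ∑ t : Fin T, Real.log (1 + x t ⬝ᵥ (designMatrix N T Λ x t)⁻¹ *ᵥ x t) =
      Real.log ((designMatrix N T Λ x T).det / Λ.det) := by
  set L : ℕ → ℝ := fun t => Real.log (designMatrix N T Λ x t).det
  calc ∑ t : Fin T, Real.log (1 + x t ⬝ᵥ (designMatrix N T Λ x t)⁻¹ *ᵥ x t)
      = ∑ t : Fin T, (L (t + 1) - L t) := sum_congr rfl fun t _ => by
        rw [log_one_add_dotProduct_inv_mulVec (designMatrix_posDef hΛ x t), ← designMatrix_add_one]
    _ = L T - L 0 := by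
        rw [Fin.sum_univ_eq_sum_range fun t => L (t + 1) - L t, sum_range_sub]
    _ = Real.log ((designMatrix N T Λ x T).det / Λ.det) := by
        rw [Real.log_div (designMatrix_posDef hΛ x T).det_pos.ne' hΛ.det_pos.ne']
        simp only [L, designMatrix_zero]

/-- The **elliptical potential lemma**. -/
theorem sum_min_one_le_two_mul_log_det_div_det (hΛ : Λ.PosDef) (x : Fin T → Fin N → ℝ) :
    ∑ t : Fin T, min 1 (x t ⬝ᵥ (designMatrix N T Λ x t)⁻¹ *ᵥ x t) ≤
      2 * Real.log ((designMatrix N T Λ x T).det / Λ.det) := by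
  rw [← sum_log_one_add_eq_log_det_div_det hΛ, mul_sum]
  exact sum_le_sum fun t _ =>
    min_one_le_two_mul_log_one_add (dotProduct_inv_designMatrix_mulVec_nonneg hΛ x t)

theorem sum_le_mul_sqrt_log_det_div_det (hΛ : Λ.PosDef) (x : Fin T → Fin N → ℝ) {c : ℝ}
    (hc : 0 ≤ c) {ρ : Fin T → ℝ}
    (hρ : ∀ t, ρ t ≤ min 2 (2 * c * √(x t ⬝ᵥ (designMatrix N T Λ x t)⁻¹ *ᵥ x t))) :
    ∑ t, ρ t ≤ (2 * c + 2) * √(2 * T * Real.log ((designMatrix N T Λ x T).det / Λ.det)) := by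
  set q : Fin T → ℝ := fun t => x t ⬝ᵥ (designMatrix N T Λ x t)⁻¹ *ᵥ x t
  calc ∑ t, ρ t
      ≤ ∑ t, (2 * c + 2) * min 1 √(q t) := sum_le_sum fun t _ =>
        (hρ t).trans (min_two_le_mul_min_one hc (Real.sqrt_nonneg _))
    _ = (2 * c + 2) * ∑ t, min 1 √(q t) := (mul_sum ..).symm
    _ ≤ (2 * c + 2) * √(T * ∑ t, min 1 (q t)) := by
        gcongr
        simpa using sum_min_one_sqrt_le (dotProduct_inv_designMatrix_mulVec_nonneg hΛ x)
    _ ≤ (2 * c + 2) * √(2 * T * Real.log ((designMatrix N T Λ x T).det / Λ.det)) := by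
        rw [mul_comm 2 (T : ℝ), mul_assoc (T : ℝ)]
        gcongr
        exact sum_min_one_le_two_mul_log_det_div_det hΛ x

end DesignMatrix

theorem spectralUCB_summation_step_general {N T : ℕ} {ev : ℕ → ℝ} (hev_pos : 0 < ev 1)
    (hev_mono : MonotoneOn ev (Set.Icc 1 N)) {U Λ : Matrix (Fin N) (Fin N) ℝ}
    (hU : U ∈ unitaryGroup (Fin N) ℝ)
    (hΛ : Λ = U * diagonal (fun i : Fin N => ev (i + 1)) * star U)
    {x : Fin T → Fin N → ℝ} (hx : ∀ t, ∑ i, x t i ^ 2 ≤ 1) {c : ℝ} (hc : 0 ≤ c) {ρ : Fin T → ℝ}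
    (hρ : ∀ t, ρ t ≤ min 2 (2 * c * √(x t ⬝ᵥ (designMatrix N T Λ x t)⁻¹ *ᵥ x t)))
    {d : ℕ} (hd : IsGreatest (effDimSet N ev T) d) :
    ∑ t, ρ t ≤ (2 * c + 2) * √(2 * T * Real.log ((designMatrix N T Λ x T).det / Λ.det)) ∧
      ∑ t, ρ t ≤ (2 * c + 2) * 2 * √(d * T * Real.log (1 + T / ev 1)) := by
  have hΛ_pos : Λ.PosDef := by
    have hU_unit : IsUnit U := Unitary.isUnit_coe (U := ⟨U, hU⟩)
    rw [hΛ, hU_unit.posDef_star_right_conjugate_iff, posDef_diagonal_iff]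
    exact apply_val_add_one_pos hev_pos hev_mono
  have hlog_det : Real.log ((designMatrix N T Λ x T).det / Λ.det) ≤
      2 * d * Real.log (1 + T / ev 1) := by
    rw [designMatrix_last]
    exact log_det_add_div_det_le hev_pos hev_mono hd hU hΛ (posSemidef_sum_vecMulVec_self _ x)
      (by simpa using trace_sum_vecMulVec_self_le_card hx)
  have hbound := sum_le_mul_sqrt_log_det_div_det hΛ_pos x hc hρ
  refine ⟨hbound, hbound.trans ?_⟩
  calc (2 * c + 2) * √(2 * T * Real.log ((designMatrix N T Λ x T).det / Λ.det))
      ≤ (2 * c + 2) * √(2 * T * (2 * d * Real.log (1 + T / ev 1))) := by gcongr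
    _ = (2 * c + 2) * √(2 ^ 2 * (d * T * Real.log (1 + T / ev 1))) := by
        congr 2
        ring
    _ = (2 * c + 2) * 2 * √(d * T * Real.log (1 + T / ev 1)) := by
        rw [Real.sqrt_mul (by positivity), Real.sqrt_sq zero_le_two, ← mul_assoc]

/-- **Summation step of the SpectralUCB regret analysis.**
Let `Λ` be diagonal with entries `0 < λ = λ_1 ≤ … ≤ λ_N` (1-indexed by `ev`),
let `x_1, …, x_T` have norm at most `1`, `V_0 = Λ`, `V_t = V_{t-1} + x_t x_tᵀ`,
and `c > 0`.  If `0 ≤ ρ_t ≤ min(2, 2c ‖x_t‖_{V_{t-1}⁻¹})` for all `t`, then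
`∑ ρ_t ≤ (2c+2) √(2 T log (det V_T / det Λ))`; in particular, with `d` the
effective dimension, `∑ ρ_t ≤ (2c+2) · 2 √(d T log(1 + T/λ))`. -/
theorem spectralUCB_summation_step
    (N T : ℕ) (hN : 1 ≤ N)
    (ev : ℕ → ℝ)
    (hev_pos : 0 < ev 1)
    (hev_mono : MonotoneOn ev (Set.Icc 1 N))
    (Λ : Matrix (Fin N) (Fin N) ℝ)
    (hΛ : Λ = Matrix.diagonal fun i : Fin N => ev ((i : ℕ) + 1))
    (x : Fin T → Fin N → ℝ)
    (hx : ∀ t, ∑ i, (x t i) ^ 2 ≤ 1)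
    (c : ℝ) (hc : 0 < c)
    (ρ : Fin T → ℝ)
    (hρ0 : ∀ t, 0 ≤ ρ t)
    (hρ : ∀ t, ρ t ≤ min 2
      (2 * c * Real.sqrt (x t ⬝ᵥ (designMatrix N T Λ x (t : ℕ))⁻¹ *ᵥ x t)))
    (d : ℕ)
    (hd : IsGreatest (effDimSet N ev (T : ℝ)) d) :
    (∑ t, ρ t
        ≤ (2 * c + 2) * Real.sqrt
            (2 * T * Real.log ((designMatrix N T Λ x T).det / Λ.det)))
      ∧ ∑ t, ρ t
          ≤ (2 * c + 2) * 2
              * Real.sqrt (d * T * Real.log (1 + (T : ℝ) / ev 1)) := by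
  exact spectralUCB_summation_step_general hev_pos hev_mono (one_mem _) (by simpa using hΛ) hx
    hc.le hρ hd
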